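/- Let L be a compact subset of ℂ and let U ⊆ ℂ be open with L ⊆ U. Then the following are equivalent: (i) every function f : ℂ → ℂ which is continuous on ℂ, holomorphic on ℂ∖L, and has a finite limit at infinity, is constant (i.e. the continuous analytic capacity a(L) is zero); (ii) every function f which is continuous on U and holomorphic on U∖L is holomorphic on U. -/

import Mathlib

open Filter

/-!
Let `f` be holomorphic on `U \ L` and let `χ` be a smooth cutoff function, equal to `1` near `L`
and supported in `U`. Then `φ = ∂̄(χ f)` vanishes on `V \ L` for some neighbourhood `V` of `L`, so
that, once set to `0` on `L`, it is smooth with compact support on the whole plane and its Cauchy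
transform `u` solves `∂̄u = φ` and vanishes at infinity. Hence `F = χ f - u` is holomorphic off
`L` and vanishes at infinity, while `f - F` is holomorphic on `U` (near `L` it equals `u`). If `f`
is continuous on `U`, then so is `F` on the plane, and if such an `F` must be constant, then
`f = F + (f - F)` is holomorphic on `U`. Conversely, removability makes a continuous function that
is holomorphic off `L` entire, and Liouville's theorem applies if it has a finite limit at
infinity.
-/

section

open MeasureTheory Complex Set Function Topology
open scoped Real ContDiff Convolution ComplexConjugate

variable {E : Type*} [NormedAddCommGroup E] [NormedSpace ℂ E]

section Dbar

/-- The Wirtinger derivative `∂f/∂z̄ = (∂f/∂x + i ∂f/∂y) / 2`. The real Fréchet derivative has junk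
value `0` where `f` is not real differentiable, and hence so does `dbar f`. -/
noncomputable def dbar (f : ℂ → E) (z : ℂ) : E :=
  (2⁻¹ : ℂ) • (fderiv ℝ f z 1 + I • fderiv ℝ f z I)

variable {f g : ℂ → E} {z : ℂ}

lemma differentiableAt_complex_iff_dbar_eq_zero :
    DifferentiableAt ℂ f z ↔ DifferentiableAt ℝ f z ∧ dbar f z = 0 := by
  rw [differentiableAt_complex_iff_differentiableAt_real]
  refine and_congr_right fun _ ↦ ⟨fun h ↦ ?_, fun h ↦ ?_⟩
  · rw [dbar, h, smul_smul, I_mul_I, neg_one_smul, add_neg_cancel, smul_zero]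
  · have hsum : fderiv ℝ f z 1 + I • fderiv ℝ f z I = 0 :=
      (smul_eq_zero_iff_right (inv_ne_zero two_ne_zero)).mp h
    rw [eq_neg_of_add_eq_zero_left hsum, smul_neg, smul_smul, I_mul_I, neg_one_smul, neg_neg]

lemma dbar_sub (hf : DifferentiableAt ℝ f z) (hg : DifferentiableAt ℝ g z) :
    dbar (f - g) z = dbar f z - dbar g z := by
  simp only [dbar, fderiv_sub hf hg, _root_.sub_apply]
  module

lemma dbar_comp_add_left (a : ℂ) : dbar (fun w ↦ f (a + w)) z = dbar f (a + z) := by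
  simp only [dbar, fderiv_comp_add_left]

lemma tsupport_dbar_subset (f : ℂ → E) : tsupport (dbar f) ⊆ tsupport f := by
  refine closure_minimal (fun z hz ↦ ?_) (isClosed_tsupport f)
  refine support_fderiv_subset ℝ (f := f) fun hfz ↦ hz ?_
  simp only [dbar, hfz, _root_.zero_apply, smul_zero, add_zero]

lemma contDiffAt_dbar {m n : WithTop ℕ∞} (hf : ContDiffAt ℝ n f z) (hmn : m + 1 ≤ n) :
    ContDiffAt ℝ m (dbar f) z := by
  have hfderiv := hf.fderiv_right hmn
  exact ((hfderiv.clm_apply contDiffAt_const).add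
    ((hfderiv.clm_apply contDiffAt_const).const_smul I)).const_smul (2⁻¹ : ℂ)

end Dbar

section PolarCoordinates

lemma apply_add_I_smul_apply_I_mul (T : ℂ →L[ℝ] E) (u : ℂ) :
    T u + I • T (I * u) = conj u • (T 1 + I • T I) := by
  have hT (x y : ℝ) : T (x + y * I) = (x : ℂ) • T 1 + (y : ℂ) • T I := by
    rw [coe_smul, coe_smul, ← map_smul, ← map_smul, ← map_add]
    simp
  have hu : T u = (u.re : ℂ) • T 1 + (u.im : ℂ) • T I := by rw [← hT, re_add_im]
  have hIu : T (I * u) = (-u.im : ℂ) • T 1 + (u.re : ℂ) • T I := by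
    rw [← ofReal_neg, ← hT]
    congr 1
    apply Complex.ext <;> simp
  have hconj : conj u = u.re - u.im * I := by
    apply Complex.ext <;> simp
  rw [hu, hIu, hconj]
  linear_combination (norm := module) I_mul_I • (u.im : ℂ) • T I

variable {V F : Type*} [NormedAddCommGroup V] [NormedSpace ℝ V]
  [NormedAddCommGroup F] [NormedSpace ℝ F]

lemma circleMap_zero_eq_smul (r θ : ℝ) : circleMap 0 r θ = r • circleMap 0 1 θ := by
  simp [circleMap]

lemma integrableOn_polarCoord_clm_apply {g : ℂ → ℂ →L[ℝ] F} (hg : Continuous g)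
    (hgc : HasCompactSupport g) {v : ℝ → ℂ} (hv : Continuous v) :
    IntegrableOn (fun p : ℝ × ℝ ↦ g (circleMap 0 p.1 p.2) (v p.2)) polarCoord.target := by
  obtain ⟨R, hR⟩ := hgc.isCompact.isBounded.subset_closedBall 0
  have hcont : Continuous fun p : ℝ × ℝ ↦ g (circleMap 0 p.1 p.2) (v p.2) :=
    (hg.comp (by unfold circleMap; fun_prop)).clm_apply (hv.comp continuous_snd)
  have hbox := hcont.continuousOn.integrableOn_compact (μ := volume)
    ((isCompact_Icc (a := 0) (b := R)).prod (isCompact_Icc (a := -π) (b := π)))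
  refine hbox.of_forall_sdiff_eq_zero polarCoord.open_target.measurableSet ?_
  rintro ⟨r, θ⟩ ⟨⟨hr, hθ⟩, hout⟩
  have hRr : R < r := not_le.mp fun hrR ↦ hout ⟨⟨le_of_lt hr, hrR⟩, Ioo_subset_Icc_self hθ⟩
  have hvanish : g (circleMap 0 r θ) = 0 := by
    by_contra hne
    have hle : |r| ≤ R := by simpa using hR (subset_tsupport _ hne)
    exact (hRr.trans_le ((le_abs_self r).trans hle)).false
  simp only [hvanish, _root_.zero_apply]

variable [CompleteSpace F]

lemma integral_Ioi_fderiv_smul {f : V → F} (hf : ContDiff ℝ 1 f) (hfc : HasCompactSupport f)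
    {v : V} (hv : v ≠ 0) : ∫ r in Ioi (0 : ℝ), fderiv ℝ f (r • v) v = -f 0 := by
  have hderiv (r : ℝ) : deriv (fun r : ℝ ↦ f (r • v)) r = fderiv ℝ f (r • v) v := by
    have hray : HasDerivAt (fun r : ℝ ↦ r • v) v r := by
      simpa using (hasDerivAt_id r).smul_const v
    exact ((hf.differentiable one_ne_zero _).hasFDerivAt.comp_hasDerivAt r hray).deriv
  have hint := HasCompactSupport.integral_Ioi_deriv_eq (f := fun r : ℝ ↦ f (r • v))
    (hf.comp (contDiff_id.smul contDiff_const))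
    (hfc.comp_isClosedEmbedding (isClosedEmbedding_smul_left hv)) 0
  simpa only [hderiv, zero_smul] using hint

lemma integral_Ioo_fderiv_circleMap {f : ℂ → F} (hf : ContDiff ℝ 1 f) (c : ℂ) (r : ℝ) :
    ∫ θ in Ioo (-π) π, fderiv ℝ f (circleMap c r θ) (circleMap 0 r θ * I) = 0 := by
  have hderiv (θ : ℝ) : HasDerivAt (fun θ ↦ f (circleMap c r θ))
      (fderiv ℝ f (circleMap c r θ) (circleMap 0 r θ * I)) θ :=
    (hf.differentiable one_ne_zero _).hasFDerivAt.comp_hasDerivAt θ (hasDerivAt_circleMap c r θ)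
  have hcont : Continuous fun θ ↦ fderiv ℝ f (circleMap c r θ) (circleMap 0 r θ * I) :=
    ((hf.continuous_fderiv one_ne_zero).comp (continuous_circleMap c r)).clm_apply
      ((continuous_circleMap 0 r).mul continuous_const)
  have hclosed : circleMap c r π = circleMap c r (-π) := by
    simpa [two_mul] using periodic_circleMap c r (-π)
  rw [← integral_Ioc_eq_integral_Ioo, ← intervalIntegral.integral_of_le (by linarith [Real.pi_pos]),
    intervalIntegral.integral_eq_sub_of_hasDerivAt (fun θ _ ↦ hderiv θ)
      (hcont.intervalIntegrable _ _), hclosed, sub_self]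

lemma integral_polarCoord_fderiv_radial {f : ℂ → F} (hf : ContDiff ℝ 1 f)
    (hfc : HasCompactSupport f) :
    ∫ p in polarCoord.target, fderiv ℝ f (circleMap 0 p.1 p.2) (circleMap 0 1 p.2) =
      -(2 * π) • f 0 := by
  have hint := integrableOn_polarCoord_clm_apply (hf.continuous_fderiv one_ne_zero)
    (hfc.fderiv ℝ) (continuous_circleMap 0 1)
  have hray (θ : ℝ) :
      ∫ r in Ioi (0 : ℝ), fderiv ℝ f (circleMap 0 r θ) (circleMap 0 1 θ) = -f 0 := by
    simpa only [← circleMap_zero_eq_smul] using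
      integral_Ioi_fderiv_smul hf hfc (circleMap_ne_center (θ := θ) one_ne_zero)
  rw [polarCoord_target, Measure.volume_eq_prod] at hint ⊢
  rw [IntegrableOn, ← Measure.prod_restrict] at hint
  rw [← Measure.prod_restrict, integral_prod_symm _ hint]
  simp only [hray, setIntegral_const, Real.volume_real_Ioo_of_le (neg_le_self Real.pi_pos.le)]
  module

lemma integral_polarCoord_fderiv_angular {f : ℂ → F} (hf : ContDiff ℝ 1 f)
    (hfc : HasCompactSupport f) :
    ∫ p in polarCoord.target, fderiv ℝ f (circleMap 0 p.1 p.2) (I * circleMap 0 1 p.2) = 0 := by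
  have hint := integrableOn_polarCoord_clm_apply (hf.continuous_fderiv one_ne_zero)
    (hfc.fderiv ℝ) ((continuous_circleMap 0 1).const_mul I)
  rw [polarCoord_target, Measure.volume_eq_prod] at hint ⊢
  rw [setIntegral_prod _ hint]
  refine setIntegral_eq_zero_of_forall_eq_zero fun r hr ↦ ?_
  have hcircle := integral_Ioo_fderiv_circleMap hf 0 r
  have htangent (θ : ℝ) : circleMap 0 r θ * I = r • (I * circleMap 0 1 θ) := by
    rw [circleMap_zero_eq_smul r, smul_mul_assoc, mul_comm I]
  simp only [htangent, map_smul, integral_smul] at hcircle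
  exact (smul_eq_zero_iff_right (ne_of_gt hr)).mp hcircle

end PolarCoordinates

section CauchyTransform

variable {f : ℂ → E}

-- At `w = r e^{iθ}` the operator `2 w⁻¹ ∂/∂z̄` is `r⁻¹ (∂/∂r + i r⁻¹ ∂/∂θ)`, and the Jacobian of
-- polar coordinates cancels the outer factor `r⁻¹`.
lemma integral_inv_smul_dbar [CompleteSpace E] (hf : ContDiff ℝ 1 f) (hfc : HasCompactSupport f) :
    ∫ w, w⁻¹ • dbar f w = -(π : ℂ) • f 0 := by
  let radial (p : ℝ × ℝ) : E := fderiv ℝ f (circleMap 0 p.1 p.2) (circleMap 0 1 p.2)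
  let angular (p : ℝ × ℝ) : E := fderiv ℝ f (circleMap 0 p.1 p.2) (I * circleMap 0 1 p.2)
  have hpolar : EqOn (fun p ↦ p.1 • (fun w ↦ w⁻¹ • dbar f w) (Complex.polarCoord.symm p))
      (fun p ↦ (2⁻¹ : ℂ) • (radial p + I • angular p)) polarCoord.target := by
    rintro ⟨r, θ⟩ ⟨hr, -⟩
    have hr0 : (r : ℂ) ≠ 0 := ofReal_ne_zero.mpr (ne_of_gt hr)
    have hsymm : Complex.polarCoord.symm (r, θ) = circleMap 0 r θ := by
      simp [circleMap, exp_mul_I]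
    have hinv : (circleMap 0 1 θ)⁻¹ = conj (circleMap 0 1 θ) := inv_eq_conj (by simp)
    simp only [hsymm, radial, angular, apply_add_I_smul_apply_I_mul, dbar]
    rw [← hinv, circleMap_zero_eq_smul r, real_smul, mul_inv, ← coe_smul, smul_smul,
      mul_inv_cancel_left₀ hr0, smul_comm]
  have hfderiv : Continuous (fderiv ℝ f) := hf.continuous_fderiv one_ne_zero
  have hradial : IntegrableOn radial polarCoord.target :=
    integrableOn_polarCoord_clm_apply hfderiv (hfc.fderiv ℝ) (continuous_circleMap 0 1)
  have hangular : IntegrableOn (fun p ↦ I • angular p) polarCoord.target :=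
    (integrableOn_polarCoord_clm_apply hfderiv (hfc.fderiv ℝ)
      ((continuous_circleMap 0 1).const_mul I)).smul I
  calc ∫ w, w⁻¹ • dbar f w
    _ = ∫ p in polarCoord.target, (2⁻¹ : ℂ) • (radial p + I • angular p) := by
      rw [← Complex.integral_comp_polarCoord_symm]
      exact setIntegral_congr_fun polarCoord.open_target.measurableSet hpolar
    _ = (2⁻¹ : ℂ) • (-(2 * π) • f 0 + I • (0 : E)) := by
      rw [integral_smul, integral_add hradial hangular, integral_smul,
        integral_polarCoord_fderiv_radial hf hfc, integral_polarCoord_fderiv_angular hf hfc]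
    _ = -(π : ℂ) • f 0 := by
      rw [← coe_smul]
      push_cast
      module

/-- The Cauchy transform of `f`, that is the convolution of `f` with the fundamental solution
`1 / (π z)` of the `∂̄`-operator `dbar`. As a Bochner integral it is `0` at the points where the
integral does not converge. -/
noncomputable def cauchyTransform (f : ℂ → E) (z : ℂ) : E :=
  (π⁻¹ : ℂ) • ∫ w, (z - w)⁻¹ • f w

/-- **Cauchy–Pompeiu formula** -/
theorem cauchyTransform_dbar [CompleteSpace E] (hf : ContDiff ℝ 1 f) (hfc : HasCompactSupport f) :
    cauchyTransform (dbar f) = f := by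
  ext z
  have hpompeiu : ∫ w, w⁻¹ • dbar f (z + w) = -(π : ℂ) • f z := by
    simpa [dbar_comp_add_left] using
      integral_inv_smul_dbar (f := fun w ↦ f (z + w)) (hf.comp (contDiff_const.add contDiff_id))
        (hfc.comp_homeomorph (Homeomorph.addLeft z))
  have hshift : ∫ w, (z - w)⁻¹ • dbar f w = -∫ w, w⁻¹ • dbar f (z + w) := by
    rw [← integral_add_left_eq_self _ z, ← integral_neg]
    simp
  rw [cauchyTransform, hshift, hpompeiu, neg_smul, neg_neg, smul_smul,
    inv_mul_cancel₀ (ofReal_ne_zero.mpr Real.pi_ne_zero), one_smul]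

lemma locallyIntegrable_inv : LocallyIntegrable fun w : ℂ ↦ w⁻¹ := by
  refine locallyIntegrable_of_norm_le_rpow (C := 1) (α := 1) (by simp) (by simp)
    (.of_forall fun w ↦ ?_) measurable_inv.aestronglyMeasurable
  simp [Real.rpow_neg_one]

lemma cauchyTransform_eq_convolution (f : ℂ → E) :
    cauchyTransform f = (π⁻¹ : ℂ) • ((·⁻¹) ⋆[ContinuousLinearMap.lsmul ℝ ℂ] f) := by
  ext z
  rw [cauchyTransform, ← integral_sub_left_eq_self _ _ z]
  simp [convolution_def]

lemma differentiable_cauchyTransform (hf : ContDiff ℝ 1 f) (hfc : HasCompactSupport f) :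
    Differentiable ℝ (cauchyTransform f) := by
  rw [cauchyTransform_eq_convolution]
  exact fun z ↦ (hfc.hasFDerivAt_convolution_right _ locallyIntegrable_inv hf
    z).differentiableAt.const_smul _

lemma fderiv_cauchyTransform_apply (hf : ContDiff ℝ 1 f) (hfc : HasCompactSupport f) (z v : ℂ) :
    fderiv ℝ (cauchyTransform f) z v = cauchyTransform (fderiv ℝ f · v) z := by
  have hconv := hfc.hasFDerivAt_convolution_right (ContinuousLinearMap.lsmul ℝ ℂ)
    locallyIntegrable_inv hf z
  rw [cauchyTransform_eq_convolution, cauchyTransform_eq_convolution,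
    fderiv_const_smul hconv.differentiableAt, hconv.fderiv, _root_.smul_apply,
    convolution_precompR_apply _ locallyIntegrable_inv (hfc.fderiv ℝ)
      (hf.continuous_fderiv one_ne_zero), Pi.smul_apply]

lemma integrable_cauchyKernel_smul (hf : Continuous f) (hfc : HasCompactSupport f) (z : ℂ) :
    Integrable fun w ↦ (z - w)⁻¹ • f w :=
  (hfc.convolutionExists_right (.lsmul ℝ ℂ) locallyIntegrable_inv hf z).integrable_swap

theorem dbar_cauchyTransform [CompleteSpace E] (hf : ContDiff ℝ 1 f) (hfc : HasCompactSupport f) :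
    dbar (cauchyTransform f) = f := by
  have hdbar : dbar (cauchyTransform f) = cauchyTransform (dbar f) := by
    ext z
    have hint (v : ℂ) : Integrable fun w ↦ (z - w)⁻¹ • fderiv ℝ f w v :=
      integrable_cauchyKernel_smul ((hf.continuous_fderiv one_ne_zero).clm_apply continuous_const)
        (hfc.fderiv_apply ℝ v) z
    have hsplit : ∫ w, (z - w)⁻¹ • dbar f w = (2⁻¹ : ℂ) • ((∫ w, (z - w)⁻¹ • fderiv ℝ f w 1) +
        I • ∫ w, (z - w)⁻¹ • fderiv ℝ f w I) := by
      have hintI : Integrable fun w ↦ I • (z - w)⁻¹ • fderiv ℝ f w I := (hint I).smul I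
      rw [← integral_smul I, ← integral_add (hint 1) hintI, ← integral_smul]
      congr with w
      rw [dbar]
      module
    rw [dbar, fderiv_cauchyTransform_apply hf hfc, fderiv_cauchyTransform_apply hf hfc]
    simp only [cauchyTransform, hsplit]
    module
  rw [hdbar, cauchyTransform_dbar hf hfc]

lemma tendsto_cauchyTransform_cocompact (hf : Integrable f) (hfc : HasCompactSupport f) :
    Tendsto (cauchyTransform f) (cocompact ℂ) (𝓝 0) := by
  obtain ⟨R, hR⟩ := hfc.isCompact.isBounded.subset_closedBall 0
  have hbound : ∀ᶠ z in cocompact ℂ,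
      ‖∫ w, (z - w)⁻¹ • f w‖ ≤ (‖z‖ - R)⁻¹ * ∫ w, ‖f w‖ := by
    filter_upwards [tendsto_norm_cocompact_atTop.eventually_gt_atTop R] with z hz
    rw [← integral_const_mul]
    refine norm_integral_le_of_norm_le (hf.norm.const_mul _) (.of_forall fun w ↦ ?_)
    by_cases hw : f w = 0
    · simp [hw]
    have hwR : ‖w‖ ≤ R := by simpa using hR (subset_tsupport _ hw)
    have hzw : ‖z‖ - R ≤ ‖z - w‖ := by linarith [norm_sub_norm_le z w]
    rw [norm_smul, norm_inv]
    gcongr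
  have hdecay : Tendsto (fun z : ℂ ↦ (‖z‖ - R)⁻¹ * ∫ w, ‖f w‖) (cocompact ℂ) (𝓝 0) := by
    have hshift : Tendsto (fun z : ℂ ↦ ‖z‖ - R) (cocompact ℂ) atTop :=
      tendsto_atTop_add_const_right _ (-R) tendsto_norm_cocompact_atTop
    simpa using hshift.inv_tendsto_atTop.mul_const (∫ w, ‖f w‖)
  simpa only [smul_zero] using! (squeeze_zero_norm' hbound hdecay).const_smul (π⁻¹ : ℂ)

end CauchyTransform

section LaurentDecomposition

lemma exists_contDiff_eventuallyEq_one_nhdsSet {V : Type*} [NormedAddCommGroup V]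
    [NormedSpace ℝ V] [FiniteDimensional ℝ V] {K U : Set V} (hK : IsCompact K) (hU : IsOpen U)
    (hKU : K ⊆ U) :
    ∃ χ : V → ℝ, ContDiff ℝ ∞ χ ∧ HasCompactSupport χ ∧ tsupport χ ⊆ U ∧ χ =ᶠ[𝓝ˢ K] 1 := by
  obtain ⟨K', hK', hKK', hK'U⟩ := exists_compact_between hK hU hKU
  obtain ⟨χ, hχ_one, hχ_zero, -⟩ := exists_contMDiffMap_one_nhds_of_subset_interior
    (n := ⊤) (modelWithCornersSelf ℝ V) hK.isClosed hKK'
  have hsupp : support χ ⊆ K' := support_subset_iff'.mpr hχ_zero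
  exact ⟨χ, χ.contMDiff.contDiff, .of_support_subset_isCompact hK' hsupp,
    (closure_minimal hsupp hK'.isClosed).trans hK'U, hχ_one⟩

lemma contDiffOn_smul_of_tsupport_subset {V F : Type*} [NormedAddCommGroup V] [NormedSpace ℝ V]
    [NormedAddCommGroup F] [NormedSpace ℝ F] {n : WithTop ℕ∞} {χ : V → ℝ} {f : V → F} {s U : Set V}
    (hs : IsOpen s) (hU : IsOpen U) (hχ : ContDiffOn ℝ n χ s) (hχU : tsupport χ ⊆ U)
    (hf : ContDiffOn ℝ n f (U ∩ s)) : ContDiffOn ℝ n (χ • f) s := by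
  refine fun z hz ↦ ContDiffAt.contDiffWithinAt ?_
  by_cases hzU : z ∈ U
  · exact (hχ.contDiffAt (hs.mem_nhds hz)).smul
      (hf.contDiffAt ((hU.inter hs).mem_nhds ⟨hzU, hz⟩))
  · have hχz : χ • f =ᶠ[𝓝 z] fun _ ↦ 0 := by
      filter_upwards [notMem_tsupport_iff_eventuallyEq.mp (notMem_subset hχU hzU)] with w hw
      simp [hw]
    exact contDiffAt_const.congr_of_eventuallyEq hχz

variable {f : ℂ → E} {K U : Set ℂ}

lemma indicator_compl_dbar_eventuallyEq_zero
    (hf : ∀ᶠ z in 𝓝ˢ K, z ∉ K → DifferentiableAt ℂ f z) :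
    Kᶜ.indicator (dbar f) =ᶠ[𝓝ˢ K] 0 := by
  filter_upwards [hf] with z hz
  exact indicator_apply_eq_zero.mpr fun hzK ↦
    (differentiableAt_complex_iff_dbar_eq_zero.mp (hz hzK)).2

lemma contDiff_indicator_compl_dbar {m n : WithTop ℕ∞} (hK : IsClosed K)
    (hsmooth : ContDiffOn ℝ n f Kᶜ) (hmn : m + 1 ≤ n)
    (hhol : ∀ᶠ z in 𝓝ˢ K, z ∉ K → DifferentiableAt ℂ f z) :
    ContDiff ℝ m (Kᶜ.indicator (dbar f)) := by
  refine contDiff_iff_contDiffAt.mpr fun z ↦ ?_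
  by_cases hz : z ∈ K
  · exact contDiffAt_const.congr_of_eventuallyEq <|
      (indicator_compl_dbar_eventuallyEq_zero hhol).filter_mono (nhds_le_nhdsSet hz)
  · have hnhds : Kᶜ ∈ 𝓝 z := hK.isOpen_compl.mem_nhds hz
    exact (contDiffAt_dbar (hsmooth.contDiffAt hnhds) hmn).congr_of_eventuallyEq <|
      (eqOn_indicator).eventuallyEq_of_mem hnhds

variable [CompleteSpace E]

lemma exists_differentiableOn_compl_sub (hK : IsClosed K) (hfc : HasCompactSupport f)
    (hsmooth : ContDiffOn ℝ 2 f Kᶜ)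
    (hhol : ∀ᶠ z in 𝓝ˢ K, z ∉ K → DifferentiableAt ℂ f z) :
    ∃ u : ℂ → E, DifferentiableOn ℂ (f - u) Kᶜ ∧ (∀ z ∈ K, DifferentiableAt ℂ u z) ∧
      Tendsto u (cocompact ℂ) (𝓝 0) := by
  let φ : ℂ → E := Kᶜ.indicator (dbar f)
  have hφ : ContDiff ℝ 1 φ := contDiff_indicator_compl_dbar hK hsmooth one_add_one_eq_two.le hhol
  have hφc : HasCompactSupport φ :=
    hfc.mono' (support_indicator.trans_subset <| inter_subset_right.trans <|
      (subset_tsupport _).trans (tsupport_dbar_subset f))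
  have hu : Differentiable ℝ (cauchyTransform φ) := differentiable_cauchyTransform hφ hφc
  refine ⟨cauchyTransform φ, fun z hz ↦ ?_, fun z hz ↦ ?_,
    tendsto_cauchyTransform_cocompact (hφ.continuous.integrable_of_hasCompactSupport hφc) hφc⟩
  · have hfz : DifferentiableAt ℝ f z :=
      (hsmooth.contDiffAt (hK.isOpen_compl.mem_nhds hz)).differentiableAt two_ne_zero
    refine (differentiableAt_complex_iff_dbar_eq_zero.mpr
      ⟨hfz.sub (hu z), ?_⟩).differentiableWithinAt
    have hφz : φ z = dbar f z := indicator_of_mem hz _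
    rw [dbar_sub hfz (hu z), dbar_cauchyTransform hφ hφc, hφz, sub_self]
  · refine differentiableAt_complex_iff_dbar_eq_zero.mpr ⟨hu z, ?_⟩
    rw [dbar_cauchyTransform hφ hφc]
    exact indicator_of_notMem (notMem_compl_iff.mpr hz) _

theorem exists_laurent_decomposition (hK : IsCompact K) (hU : IsOpen U) (hKU : K ⊆ U)
    (hf : DifferentiableOn ℂ f (U \ K)) :
    ∃ F : ℂ → E, DifferentiableOn ℂ F Kᶜ ∧ Tendsto F (cocompact ℂ) (𝓝 0) ∧
      DifferentiableOn ℂ (f - F) U := by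
  obtain ⟨χ, hχ, hχc, hχU, hχK⟩ := exists_contDiff_eventuallyEq_one_nhdsSet hK hU hKU
  have hUK : IsOpen (U \ K) := hU.sdiff hK.isClosed
  have hχfK : ∀ᶠ z in 𝓝ˢ K, (χ • f) z = f z := by
    filter_upwards [hχK] with z hz
    simp [hz]
  have hχfc : HasCompactSupport (χ • f) := hχc.smul_right
  have hsmooth : ContDiffOn ℝ 2 (χ • f) Kᶜ :=
    contDiffOn_smul_of_tsupport_subset hK.isClosed.isOpen_compl hU
      (hχ.of_le (by norm_cast)).contDiffOn hχU ((hf.contDiffOn hUK).restrict_scalars ℝ)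
  have hhol : ∀ᶠ z in 𝓝ˢ K, z ∉ K → DifferentiableAt ℂ (χ • f) z := by
    filter_upwards [hU.mem_nhdsSet.mpr hKU, hχfK.eventually_nhdsSet] with z hzU hz hzK
    exact (hf.differentiableAt (hUK.mem_nhds ⟨hzU, hzK⟩)).congr_of_eventuallyEq hz
  obtain ⟨u, hFu, huK, hu⟩ := exists_differentiableOn_compl_sub hK.isClosed hχfc hsmooth hhol
  refine ⟨χ • f - u, hFu, ?_, fun z hz ↦ DifferentiableAt.differentiableWithinAt ?_⟩
  · have hχf : Tendsto (χ • f) (cocompact ℂ) (𝓝 0) := by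
      rw [hasCompactSupport_iff_eventuallyEq, coclosedCompact_eq_cocompact] at hχfc
      exact hχfc.tendsto
    simpa using! hχf.sub hu
  by_cases hzK : z ∈ K
  · refine (huK z hzK).congr_of_eventuallyEq ?_
    filter_upwards [nhds_le_nhdsSet hzK hχfK] with w hw
    simp only [Pi.sub_apply, hw, sub_sub_cancel]
  · exact (hf.differentiableAt (hUK.mem_nhds ⟨hz, hzK⟩)).sub
      (hFu.differentiableAt (hK.isClosed.isOpen_compl.mem_nhds hzK))

end LaurentDecomposition

theorem differentiableOn_of_forall_eq_const [CompleteSpace E] {L U : Set ℂ} (hL : IsCompact L)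
    (hU : IsOpen U) (hLU : L ⊆ U)
    (hconst : ∀ F : ℂ → E, Continuous F → DifferentiableOn ℂ F Lᶜ →
      (∃ c : E, Tendsto F (cocompact ℂ) (𝓝 c)) → ∀ z w : ℂ, F z = F w)
    {f : ℂ → E} (hfc : ContinuousOn f U) (hf : DifferentiableOn ℂ f (U \ L)) :
    DifferentiableOn ℂ f U := by
  obtain ⟨F, hFL, hF0, hfF⟩ := exists_laurent_decomposition hL hU hLU hf
  have hFcont : Continuous F := by
    refine continuous_iff_continuousAt.mpr fun z ↦ ?_
    by_cases hz : z ∈ L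
    · simpa using ((hfc.sub hfF.continuousOn).continuousAt (hU.mem_nhds (hLU hz)))
    · exact hFL.continuousOn.continuousAt (hL.isClosed.isOpen_compl.mem_nhds hz)
  have hFconst : F = fun _ ↦ F 0 := funext fun z ↦ hconst F hFcont hFL ⟨0, hF0⟩ z 0
  rw [hFconst] at hfF
  simpa using! hfF.add_const (F 0)

theorem continuousAnalyticCapacity_zero_iff_removable_general [CompleteSpace E]
    {L U : Set ℂ} (hL : IsCompact L) (hU : IsOpen U) (hLU : L ⊆ U) :
    (∀ f : ℂ → E, Continuous f → DifferentiableOn ℂ f Lᶜ →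
        (∃ c : E, Tendsto f (cocompact ℂ) (𝓝 c)) → ∀ z w : ℂ, f z = f w) ↔
    (∀ f : ℂ → E, ContinuousOn f U → DifferentiableOn ℂ f (U \ L) →
        DifferentiableOn ℂ f U) := by
  refine ⟨fun hconst f hfc hf ↦ differentiableOn_of_forall_eq_const hL hU hLU hconst hfc hf, ?_⟩
  rintro hrem f hfc hf ⟨c, hc⟩ z w
  have hfU : DifferentiableOn ℂ f U := hrem f hfc.continuousOn (hf.mono fun _ hx ↦ hx.2)
  have hunion : U ∪ Lᶜ = univ := compl_subset_iff_union.mp (compl_subset_compl.mpr hLU)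
  have hfull : Differentiable ℂ f := by
    rw [← differentiableOn_univ, ← hunion]
    exact hfU.union_of_isOpen hf hU hL.isClosed.isOpen_compl
  rw [hfull.apply_eq_of_tendsto_cocompact z hc, hfull.apply_eq_of_tendsto_cocompact w hc]

end

/-- Let `L ⊆ ℂ` be compact and `U ⊆ ℂ` open with `L ⊆ U`. Then every function
continuous on `ℂ`, holomorphic off `L`, with a finite limit at infinity is constant
(i.e. `a(L) = 0`) if and only if every function continuous on `U` and holomorphic on
`U \ L` is holomorphic on `U`. -/
theorem continuousAnalyticCapacity_zero_iff_removable
    (L : Set ℂ) (hL : IsCompact L) (U : Set ℂ) (hU : IsOpen U) (hLU : L ⊆ U) :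
    (∀ f : ℂ → ℂ, Continuous f → DifferentiableOn ℂ f Lᶜ →
        (∃ c : ℂ, Tendsto f (cocompact ℂ) (nhds c)) → ∀ z w : ℂ, f z = f w) ↔
    (∀ f : ℂ → ℂ, ContinuousOn f U → DifferentiableOn ℂ f (U \ L) →
        DifferentiableOn ℂ f U) :=
  continuousAnalyticCapacity_zero_iff_removable_general hL hU hLU
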